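/- arXiv:2306.17776 — 6 statements merged into one kernel-verified Lean document; each statement's English description precedes it below -/
import Mathlib

section
/- For every real x > 0, the map α ↦ K_α(x) is differentiable on ℝ, with derivative (d/dα) K_α(x) = (1/2)∫_0^∞ u^(α−1) (log u) exp(−x(u + u⁻¹)/2) du; in particular the function u ↦ u^(α−1) (log u) exp(−x(u + u⁻¹)/2) is integrable on (0, ∞). -/
/-!
The derivative is obtained by differentiating under the integral sign. Since `exp (-x / (2u))`
decays faster than every power of `u` as `u → 0⁺`, the kernel `u ^ s * exp (-x (u + u⁻¹) / 2)` is
integrable on `(0, ∞)` for every real exponent `s` (`integrableOn_rpow_mul_besselKernel`). For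
`|ν - α| < 1` the `ν`-derivative `u ^ (ν - 1) * log u * exp (-x (u + u⁻¹) / 2)` of the integrand is
dominated, uniformly in `ν`, by `(u ^ α + u ^ (α - 2)) * (u + u⁻¹)` times the exponential, which is
a sum of such kernels (`abs_log_le_add_inv`, `rpow_le_rpow_add_rpow`). Dominated
convergence gives both the integrability and the derivative.
-/

open MeasureTheory Real Set Finset

/-- Second-kind modified Bessel function:
`K_α(x) = (1/2) ∫_0^∞ u^(α−1) exp(−x(u+u⁻¹)/2) du`. -/
noncomputable def besselK (α x : ℝ) : ℝ :=
  (1/2) * ∫ u in Set.Ioi (0:ℝ), u ^ (α - 1) * Real.exp (-(x * (u + u⁻¹)) / 2)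

/-- Generalized inverse-Gaussian `GIG(a,b,α)` density. -/
noncomputable def gigPDF (a b α z : ℝ) : ℝ :=
  ((a / b) ^ (α / 2) / (2 * besselK α (Real.sqrt (a * b)))) *
    z ^ (α - 1) * Real.exp (-(a * z + b * z⁻¹) / 2)

/-- With `t = x / (2u)`, the bound `t ^ n / n! ≤ exp t` trades the factor `exp (-x / (2u))` for
`n! (2 / x) ^ n * u ^ n`; taking `n` large makes the exponent exceed `-1`, and the factor
`exp (-x u / 2)` remains for the decay at infinity. -/
lemma integrableOn_rpow_mul_besselKernel {x : ℝ} (hx : 0 < x) (s : ℝ) :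
    IntegrableOn (fun u : ℝ => u ^ s * Real.exp (-(x * (u + u⁻¹)) / 2)) (Set.Ioi 0) := by
  obtain ⟨n, hn⟩ := exists_nat_gt (-1 - s)
  have hI := (integrableOn_rpow_mul_exp_neg_mul_rpow (p := 1) (s := s + n) (b := x / 2)
    (by linarith) one_pos (by positivity)).const_mul ((n.factorial : ℝ) * (2 / x) ^ n)
  refine hI.mono' (by fun_prop) ?_
  refine (ae_restrict_iff' measurableSet_Ioi).2 (ae_of_all _ fun u (hu : 0 < u) => ?_)
  rw [Real.norm_of_nonneg (by positivity), Real.rpow_one, Real.rpow_add hu, Real.rpow_natCast]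
  have ht : 0 < x / (2 * u) := by positivity
  have hexp : Real.exp (-(x / (2 * u))) ≤ n.factorial * (2 / x) ^ n * u ^ n := by
    have h := Real.pow_div_factorial_le_exp (x / (2 * u)) ht.le n
    have hpos : 0 < (x / (2 * u)) ^ n / n.factorial := by positivity
    rw [Real.exp_neg]
    refine (inv_anti₀ hpos h).trans_eq ?_
    rw [inv_div, div_eq_mul_inv, ← inv_pow, mul_assoc, ← mul_pow]
    congr 2
    field_simp
  have hsplit : Real.exp (-(x * (u + u⁻¹)) / 2)
      = Real.exp (-(x / (2 * u))) * Real.exp (-(x / 2) * u) := by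
    rw [← Real.exp_add]
    congr 1
    field_simp
    ring
  rw [hsplit]
  calc u ^ s * (Real.exp (-(x / (2 * u))) * Real.exp (-(x / 2) * u))
      ≤ u ^ s * ((n.factorial * (2 / x) ^ n * u ^ n) * Real.exp (-(x / 2) * u)) := by gcongr
    _ = _ := by ring

lemma abs_log_le_add_inv {u : ℝ} (hu : 0 < u) : |Real.log u| ≤ u + u⁻¹ := by
  have h1 := Real.log_le_sub_one_of_pos hu
  have h2 := Real.log_le_sub_one_of_pos (inv_pos.2 hu)
  rw [Real.log_inv] at h2
  have h3 := inv_pos.2 hu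
  rw [abs_le]
  constructor <;> linarith

/-- The first summand dominates for `u ≥ 1`, the second for `u ≤ 1`. -/
lemma rpow_le_rpow_add_rpow {u p q r : ℝ} (hu : 0 < u) (hp : p ≤ q) (hr : r ≤ p) :
    u ^ p ≤ u ^ q + u ^ r := by
  have hq0 := Real.rpow_pos_of_pos hu q
  have hr0 := Real.rpow_pos_of_pos hu r
  rcases le_total 1 u with h | h
  · linarith [Real.rpow_le_rpow_of_exponent_le h hp]
  · linarith [Real.rpow_le_rpow_of_exponent_ge hu h hr]

theorem besselK_hasDerivAt_order (x : ℝ) (hx : 0 < x) (α : ℝ) :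
    MeasureTheory.IntegrableOn
      (fun u : ℝ => u ^ (α - 1) * Real.log u * Real.exp (-(x * (u + u⁻¹)) / 2))
      (Set.Ioi 0) ∧
    HasDerivAt (fun ν : ℝ => besselK ν x)
      ((1/2) * ∫ u in Set.Ioi (0:ℝ),
        u ^ (α - 1) * Real.log u * Real.exp (-(x * (u + u⁻¹)) / 2)) α := by
  have hbound : IntegrableOn (fun u : ℝ => (u ^ α + u ^ (α - 2)) * (u + u⁻¹) *
      Real.exp (-(x * (u + u⁻¹)) / 2)) (Set.Ioi 0) := by
    have hsum := ((integrableOn_rpow_mul_besselKernel hx (α + 1)).add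
      ((integrableOn_rpow_mul_besselKernel hx (α - 1)).const_mul 2)).add
      (integrableOn_rpow_mul_besselKernel hx (α - 3))
    refine hsum.congr_fun (fun u (hu : 0 < u) => ?_) measurableSet_Ioi
    have e1 : u ^ (α + 1) = u ^ α * u := Real.rpow_add_one hu.ne' α
    have e2 : u ^ (α - 1) = u ^ α * u⁻¹ := by rw [Real.rpow_sub_one hu.ne', div_eq_mul_inv]
    have e3 : u ^ (α - 2) = u ^ α * u⁻¹ * u⁻¹ := by
      rw [show α - 2 = α - 1 - 1 by ring, Real.rpow_sub_one hu.ne', e2, div_eq_mul_inv]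
    have e4 : u ^ (α - 3) = u ^ α * u⁻¹ * u⁻¹ * u⁻¹ := by
      rw [show α - 3 = α - 2 - 1 by ring, Real.rpow_sub_one hu.ne', e3, div_eq_mul_inv]
    simp only [Pi.add_apply]
    rw [e1, e2, e3, e4]
    field_simp
    ring
  have key := hasDerivAt_integral_of_dominated_loc_of_deriv_le
    (μ := volume.restrict (Set.Ioi (0:ℝ)))
    (F := fun ν u : ℝ => u ^ (ν - 1) * Real.exp (-(x * (u + u⁻¹)) / 2))
    (F' := fun ν u : ℝ => u ^ (ν - 1) * Real.log u * Real.exp (-(x * (u + u⁻¹)) / 2))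
    (Metric.ball_mem_nhds α one_pos)
    (Filter.Eventually.of_forall fun ν => by fun_prop)
    (integrableOn_rpow_mul_besselKernel hx (α - 1)) (by fun_prop)
    ((ae_restrict_iff' measurableSet_Ioi).2 (ae_of_all _ fun u (hu : 0 < u) ν hν => by
      rw [Metric.mem_ball, Real.dist_eq, abs_lt] at hν
      rw [norm_mul, norm_mul, Real.norm_of_nonneg (Real.rpow_nonneg hu.le _),
        Real.norm_of_nonneg (Real.exp_pos _).le, Real.norm_eq_abs]
      have h1 := rpow_le_rpow_add_rpow (p := ν - 1) (q := α) (r := α - 2) hu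
        (by linarith [hν.2]) (by linarith [hν.1])
      have h2 := abs_log_le_add_inv hu
      gcongr))
    hbound
    ((ae_restrict_iff' measurableSet_Ioi).2 (ae_of_all _ fun u (hu : 0 < u) ν _ => by
      have h := (((hasDerivAt_id ν).sub_const 1).const_rpow hu).mul_const
        (Real.exp (-(x * (u + u⁻¹)) / 2))
      refine h.congr_deriv ?_
      simp only [id]
      ring))
  exact ⟨key.1, key.2.const_mul (1/2)⟩
end

section
/- Let p ≥ 1, let λ_1, …, λ_p > 0, φ > 0, α ∈ ℝ, and let y_1, …, y_p ∈ ℕ. Mixing independent Poisson(λ_i z) probabilities over the GIG(φ, φ, α) density yields the multivariate Poisson generalized inverse-Gaussian probability mass function: ∫_0^∞ [∏_{i=1}^p e^{−λ_i z} (λ_i z)^{y_i} / y_i!] · g(z; φ, φ, α) dz = [K_{s+α}(√(φ(2Λ+φ))) / K_α(φ)] · [∏_{i=1}^p λ_i^{y_i} / y_i!] · (φ/(2Λ+φ))^{(s+α)/2}, where s = ∑_{i=1}^p y_i and Λ = ∑_{i=1}^p λ_i. -/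
/-!
Multiplying the Poisson probabilities by the GIG density gives, up to factors free of `z`, the
unnormalized GIG kernel `z ^ (s + α - 1) * exp (-((2Λ + φ) z + φ z⁻¹) / 2)`. Its total mass is
obtained from the defining integral of `besselK` by the rescaling `z = √(b/a) u`
(`integral_gig_kernel`). The normalizing constant `besselK α φ` enters both sides in the same way,
so neither its positivity nor the convergence of any integral is needed: the change of variables
holds for Bochner integrals unconditionally.
-/

open MeasureTheory Real Set Finset

/-- The `MPGIG_p(λ, φ, α)` probability mass function. -/
noncomputable def mpgigPMF (p : ℕ) (lam : Fin p → ℝ) (φ α : ℝ) (y : Fin p → ℕ) : ℝ :=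
  (besselK ((∑ i, (y i : ℝ)) + α) (Real.sqrt (φ * (2 * (∑ i, lam i) + φ))) / besselK α φ) *
    (∏ i, lam i ^ (y i) / (Nat.factorial (y i) : ℝ)) *
    (φ / (2 * (∑ i, lam i) + φ)) ^ (((∑ i, (y i : ℝ)) + α) / 2)

/-- The total mass of the unnormalized `GIG(a, b, ν)` kernel. The scaling factor `√(b/a)` is the
one that balances the two terms `a z` and `b z⁻¹` of the exponent. -/
lemma integral_gig_kernel {a b : ℝ} (ha : 0 < a) (hb : 0 < b) (ν : ℝ) :
    ∫ z in Set.Ioi (0:ℝ), z ^ (ν - 1) * Real.exp (-(a * z + b * z⁻¹) / 2)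
      = 2 * (b / a) ^ (ν / 2) * besselK ν (Real.sqrt (b * a)) := by
  set c := Real.sqrt (b / a) with hc
  have hc0 : 0 < c := Real.sqrt_pos.mpr (div_pos hb ha)
  have hcc : c * c = b / a := Real.mul_self_sqrt (div_pos hb ha).le
  have hac : Real.sqrt (b * a) = a * c := by
    rw [Real.sqrt_eq_iff_mul_self_eq (by positivity) (by positivity)]
    symm
    calc a * c * (a * c) = a * a * (c * c) := by ring
      _ = b * a := by rw [hcc]; field_simp
  have hbc : b = a * c * c := by rw [mul_assoc, hcc]; field_simp
  have hpow : (b / a) ^ (ν / 2) = c * c ^ (ν - 1) := by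
    rw [← hcc, ← pow_two, ← Real.rpow_natCast, ← Real.rpow_mul hc0.le,
      Real.rpow_sub_one hc0.ne']
    push_cast
    rw [mul_div_cancel₀ _ (two_ne_zero)]
    field_simp
  have key := MeasureTheory.integral_comp_mul_left_Ioi
    (fun z : ℝ => z ^ (ν - 1) * Real.exp (-(a * z + b * z⁻¹) / 2)) 0 hc0
  rw [mul_zero, smul_eq_mul, eq_inv_mul_iff_mul_eq₀ hc0.ne'] at key
  rw [← key, besselK, hac, hpow]
  have hcongr : ∫ u in Set.Ioi (0:ℝ), (c * u) ^ (ν - 1) *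
        Real.exp (-(a * (c * u) + b * (c * u)⁻¹) / 2)
      = ∫ u in Set.Ioi (0:ℝ), c ^ (ν - 1) *
        (u ^ (ν - 1) * Real.exp (-(a * c * (u + u⁻¹)) / 2)) := by
    refine setIntegral_congr_fun measurableSet_Ioi fun u hu => ?_
    have hu0 : 0 < u := hu
    have he : a * (c * u) + b * (c * u)⁻¹ = a * c * (u + u⁻¹) := by
      rw [hbc]; field_simp
    rw [he, Real.mul_rpow hc0.le hu0.le, mul_assoc]
  rw [hcongr, MeasureTheory.integral_const_mul]
  ring

/-- mixing independent `Poisson(λ_i z)` probabilities over the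
`GIG(φ,φ,α)` density yields the `MPGIG_p` probability mass function. -/
theorem mpgig_mixture (p : ℕ) (hp : 1 ≤ p) (lam : Fin p → ℝ) (hlam : ∀ i, 0 < lam i)
    (φ α : ℝ) (hφ : 0 < φ) (y : Fin p → ℕ) :
    (∫ z in Set.Ioi (0:ℝ),
        (∏ i, Real.exp (-(lam i * z)) * (lam i * z) ^ (y i) / (Nat.factorial (y i) : ℝ)) *
          gigPDF φ φ α z)
      = (besselK ((∑ i, (y i : ℝ)) + α) (Real.sqrt (φ * (2 * (∑ i, lam i) + φ)))
            / besselK α φ) *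
        (∏ i, lam i ^ (y i) / (Nat.factorial (y i) : ℝ)) *
        (φ / (2 * (∑ i, lam i) + φ)) ^ (((∑ i, (y i : ℝ)) + α) / 2) := by
  set L := ∑ i, lam i with hL
  set s := ∑ i, (y i : ℝ) with hs
  have hL0 : 0 ≤ L := Finset.sum_nonneg fun i _ => (hlam i).le
  have hcongr : (∫ z in Set.Ioi (0:ℝ),
        (∏ i, Real.exp (-(lam i * z)) * (lam i * z) ^ (y i) / (Nat.factorial (y i) : ℝ)) *
          gigPDF φ φ α z)
      = ∫ z in Set.Ioi (0:ℝ),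
        ((∏ i, lam i ^ (y i) / (Nat.factorial (y i) : ℝ)) * (1 / (2 * besselK α φ))) *
          (z ^ (s + α - 1) * Real.exp (-((2 * L + φ) * z + φ * z⁻¹) / 2)) := by
    refine setIntegral_congr_fun measurableSet_Ioi fun z hz => ?_
    have hz0 : 0 < z := hz
    have hprod : (∏ i, Real.exp (-(lam i * z)) * (lam i * z) ^ (y i) /
          (Nat.factorial (y i) : ℝ))
        = Real.exp (-(L * z)) * z ^ s * ∏ i, lam i ^ (y i) / (Nat.factorial (y i) : ℝ) := by
      have h1 : Real.exp (-(L * z)) = ∏ i, Real.exp (-(lam i * z)) := by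
        rw [← Real.exp_sum, Finset.sum_neg_distrib, ← Finset.sum_mul]
      have h2 : z ^ s = ∏ i, z ^ (y i) := by
        rw [Finset.prod_pow_eq_pow_sum, ← Real.rpow_natCast, hs]
        push_cast
        rfl
      rw [h1, h2, ← Finset.prod_mul_distrib, ← Finset.prod_mul_distrib]
      refine Finset.prod_congr rfl fun i _ => ?_
      rw [mul_pow]
      ring
    have hexp : Real.exp (-((2 * L + φ) * z + φ * z⁻¹) / 2)
        = Real.exp (-(L * z)) * Real.exp (-(φ * z + φ * z⁻¹) / 2) := by
      rw [← Real.exp_add]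
      ring_nf
    have hpow : z ^ (s + α - 1) = z ^ s * z ^ (α - 1) := by
      rw [← Real.rpow_add hz0]
      ring_nf
    simp only [gigPDF]
    rw [hprod, hexp, hpow, div_self hφ.ne', Real.one_rpow, Real.sqrt_mul_self hφ.le]
    ring
  rw [hcongr, MeasureTheory.integral_const_mul,
    integral_gig_kernel (by positivity : 0 < 2 * L + φ) hφ (s + α)]
  -- The factor `(2 * besselK α φ)⁻¹` is only rearranged, never cancelled against itself.
  ring
end

section
/- Let p ≥ 1, λ_1, …, λ_p > 0, φ > 0 and α ∈ ℝ. Define, for y = (y_1, …, y_p) ∈ ℕ^p, P(y) = [K_{s(y)+α}(√(φ(2Λ+φ))) / K_α(φ)] · [∏_{i=1}^p λ_i^{y_i} / y_i!] · (φ/(2Λ+φ))^{(s(y)+α)/2}, with s(y) = ∑_i y_i and Λ = ∑_i λ_i. Then P(y) ≥ 0 for every y and ∑_{y ∈ ℕ^p} P(y) = 1, i.e. the MPGIG_p(λ, φ, α) distribution is a probability distribution on ℕ^p. -/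
/-!
The distribution is a Poisson mixture. Rescaling the Bessel integral by `√(φ/a)`, with
`a = 2Λ + φ`, gives
`K_ν(√(φ a)) (φ/a)^(ν/2) = (1/2) ∫_0^∞ z^(ν-1) exp(-(a z + φ/z)/2) dz`
(`besselK_sqrt_mul_rpow`). Hence `2 K_α(φ) P(y)` is the integral over `z > 0` of
`z^(α-1) exp(-(a z + φ/z)/2) ∏ᵢ (λᵢ z)^(yᵢ) / yᵢ!`. By the exponential series in each coordinate
(`hasSum_prod_pow_div_factorial`), these nonnegative integrands sum over `y` to
`z^(α-1) exp(-(a z + φ/z)/2) exp(Λ z) = z^(α-1) exp(-(φ z + φ/z)/2)`,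
whose integral is `2 K_α(φ)`. This limit is integrable, so the sum of the integrands dominates
itself and may be exchanged with the integral.
-/

open MeasureTheory Real Set Finset

/-- The unnormalised `GIG(a, b, ν)` density. -/
noncomputable def gigKernel (a b ν z : ℝ) : ℝ :=
  z ^ (ν - 1) * Real.exp (-(a * z + b * z⁻¹) / 2)

lemma gigKernel_pos (a b ν : ℝ) {z : ℝ} (hz : 0 < z) : 0 < gigKernel a b ν z := by
  unfold gigKernel; positivity

lemma measurable_gigKernel (a b ν : ℝ) : Measurable (gigKernel a b ν) := by
  unfold gigKernel; fun_prop

/-- The factor `exp(-b/(2z))` beats every power of `z` near `0`, which reduces the integrability to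
that of a Gamma density with a large enough shape parameter. -/
lemma integrableOn_gigKernel {a b : ℝ} (ha : 0 < a) (hb : 0 < b) (ν : ℝ) :
    IntegrableOn (gigKernel a b ν) (Set.Ioi 0) := by
  obtain ⟨n, hn⟩ := exists_nat_gt (-ν)
  have h := (integrableOn_rpow_mul_exp_neg_mul_rpow (p := 1) (s := ν - 1 + n) (b := a / 2)
    (by linarith) one_pos (by positivity)).const_mul ((n.factorial : ℝ) * (2 / b) ^ n)
  refine Integrable.mono' h (measurable_gigKernel a b ν).aestronglyMeasurable ?_
  refine (ae_restrict_mem measurableSet_Ioi).mono fun z hz => ?_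
  have hz : 0 < z := hz
  rw [Real.norm_of_nonneg (gigKernel_pos a b ν hz).le]
  have hx : 0 < b * z⁻¹ / 2 := by positivity
  have h1 := Real.pow_div_factorial_le_exp _ hx.le n
  have h2 : Real.exp (-(b * z⁻¹ / 2)) ≤ n.factorial * ((2 / b) ^ n * z ^ n) := by
    have e : (n.factorial : ℝ) * ((2 / b) ^ n * z ^ n)
        = ((b * z⁻¹ / 2) ^ n / n.factorial)⁻¹ := by
      have e' : b * z⁻¹ / 2 = (2 / b * z)⁻¹ := by field_simp
      rw [inv_div, ← mul_pow, e', inv_pow, div_inv_eq_mul]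
    rw [e, Real.exp_neg]
    exact inv_anti₀ (by positivity) h1
  have e1 : gigKernel a b ν z
      = z ^ (ν - 1) * Real.exp (-(a / 2) * z) * Real.exp (-(b * z⁻¹ / 2)) := by
    rw [gigKernel, mul_assoc, ← Real.exp_add]
    congr 2
    ring
  rw [e1, Real.rpow_one, Real.rpow_add hz, Real.rpow_natCast]
  calc _ ≤ z ^ (ν - 1) * Real.exp (-(a / 2) * z) * (n.factorial * ((2 / b) ^ n * z ^ n)) := by
        gcongr
    _ = _ := by ring

lemma integral_gigKernel_pos {a b : ℝ} (ha : 0 < a) (hb : 0 < b) (ν : ℝ) :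
    0 < ∫ z in Set.Ioi (0 : ℝ), gigKernel a b ν z := by
  rw [setIntegral_pos_iff_support_of_nonneg_ae
    ((ae_restrict_mem measurableSet_Ioi).mono fun z hz => (gigKernel_pos a b ν hz).le)
    (integrableOn_gigKernel ha hb ν)]
  have : Function.support (gigKernel a b ν) ∩ Set.Ioi 0 = Set.Ioi 0 :=
    Set.inter_eq_right.2 fun z hz => (gigKernel_pos a b ν hz).ne'
  simp [this]

lemma besselK_eq_integral_gigKernel (ν x : ℝ) :
    besselK ν x = (1 / 2) * ∫ z in Set.Ioi (0 : ℝ), gigKernel x x ν z := by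
  simp only [besselK, gigKernel, mul_add]

lemma besselK_sqrt_mul_rpow {a b : ℝ} (ha : 0 < a) (hb : 0 < b) (ν : ℝ) :
    besselK ν (Real.sqrt (b * a)) * (b / a) ^ (ν / 2)
      = (1 / 2) * ∫ z in Set.Ioi (0 : ℝ), gigKernel a b ν z := by
  set r := Real.sqrt (b / a) with hr
  have hr0 : 0 < r := Real.sqrt_pos.2 (by positivity)
  have hr2 : r * r = b / a := Real.mul_self_sqrt (by positivity)
  have hc : Real.sqrt (b * a) = a * r := by
    rw [Real.sqrt_eq_iff_mul_self_eq (by positivity) (by positivity)]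
    symm
    calc a * r * (a * r) = a * a * (r * r) := by ring
      _ = b * a := by rw [hr2]; field_simp
  have hbr : b = a * r * r := by rw [mul_assoc, hr2]; field_simp
  have hpow : (b / a) ^ (ν / 2) = r * r ^ (ν - 1) := by
    rw [← hr2, Real.mul_rpow hr0.le hr0.le, ← Real.rpow_add hr0, add_halves,
      Real.rpow_sub_one hr0.ne']
    field_simp
  have hs := integral_comp_mul_left_Ioi (gigKernel a b ν) 0 hr0
  rw [mul_zero, smul_eq_mul] at hs
  have hg : ∫ z in Set.Ioi (0 : ℝ), gigKernel a b ν (r * z)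
      = r ^ (ν - 1) * ∫ z in Set.Ioi (0 : ℝ), gigKernel (a * r) (a * r) ν z := by
    rw [← integral_const_mul]
    refine setIntegral_congr_fun measurableSet_Ioi fun z hz => ?_
    have hz : 0 < z := hz
    simp only [gigKernel]
    rw [Real.mul_rpow hr0.le hz.le, mul_assoc, hbr]
    congr 3
    field_simp
  rw [hg] at hs
  rw [besselK_eq_integral_gigKernel, hc, hpow]
  calc _ = 1 / 2 * (r * (r ^ (ν - 1) *
        ∫ z in Set.Ioi (0 : ℝ), gigKernel (a * r) (a * r) ν z)) := by ring
    _ = _ := by rw [hs, mul_inv_cancel_left₀ hr0.ne']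

lemma hasSum_prod_pow_div_factorial (p : ℕ) (x : Fin p → ℝ) (hx : ∀ i, 0 ≤ x i) :
    HasSum (fun y : Fin p → ℕ => ∏ i, x i ^ (y i) / ((y i).factorial : ℝ))
      (Real.exp (∑ i, x i)) := by
  induction p with
  | zero => simp
  | succ n ih =>
    have h0 : HasSum (fun k : ℕ => x 0 ^ k / (k.factorial : ℝ)) (Real.exp (x 0)) := by
      rw [Real.exp_eq_exp_ℝ]
      exact NormedSpace.expSeries_div_hasSum_exp (x 0)
    have h1 := ih (fun i => x i.succ) fun i => hx _
    have hn0 : 0 ≤ fun k : ℕ => x 0 ^ k / (k.factorial : ℝ) := fun k =>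
      div_nonneg (pow_nonneg (hx 0) k) (Nat.cast_nonneg _)
    have hn1 : 0 ≤ fun y : Fin n → ℕ => ∏ i, x i.succ ^ (y i) / ((y i).factorial : ℝ) := fun y =>
      Finset.prod_nonneg fun i _ => div_nonneg (pow_nonneg (hx _) _) (Nat.cast_nonneg _)
    have h2 := Summable.mul_of_nonneg h0.summable h1.summable hn0 hn1
    have h3 := HasSum.mul h0 h1 h2
    rw [Fin.sum_univ_succ, Real.exp_add, ← (Fin.consEquiv fun _ => ℕ).hasSum_iff]
    convert! h3 using 1
    ext y
    simp [Fin.prod_univ_succ, Fin.consEquiv, mul_div_mul_comm]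

/-- The mass function as a mixture: the product of the Poisson weights, without their factor
`exp(-Λ z)`, integrated against the unnormalised `GIG(2Λ + φ, φ, α)` density. -/
lemma mpgigPMF_eq_integral {p : ℕ} {lam : Fin p → ℝ} (hlam : ∀ i, 0 < lam i) {φ : ℝ} (hφ : 0 < φ)
    (α : ℝ) (y : Fin p → ℕ) :
    mpgigPMF p lam φ α y = (∫ z in Set.Ioi (0 : ℝ), gigKernel (2 * (∑ i, lam i) + φ) φ α z *
      ∏ i, (lam i * z) ^ (y i) / ((y i).factorial : ℝ)) /
        ∫ z in Set.Ioi (0 : ℝ), gigKernel φ φ α z := by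
  have hΛ : 0 ≤ ∑ i, lam i := Finset.sum_nonneg fun i _ => (hlam i).le
  have hb := besselK_sqrt_mul_rpow (a := 2 * (∑ i, lam i) + φ) (by positivity) hφ
    ((∑ i, (y i : ℝ)) + α)
  have hI : ∫ z in Set.Ioi (0 : ℝ), gigKernel (2 * (∑ i, lam i) + φ) φ α z *
      ∏ i, (lam i * z) ^ (y i) / ((y i).factorial : ℝ)
      = (∏ i, lam i ^ (y i) / (Nat.factorial (y i) : ℝ)) *
        ∫ z in Set.Ioi (0 : ℝ), gigKernel (2 * (∑ i, lam i) + φ) φ ((∑ i, (y i : ℝ)) + α) z := by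
    rw [← integral_const_mul]
    refine setIntegral_congr_fun measurableSet_Ioi fun z hz => ?_
    have hz : 0 < z := hz
    have e1 : ∏ i, (lam i * z) ^ (y i) / ((y i).factorial : ℝ)
        = (∏ i, lam i ^ (y i) / (Nat.factorial (y i) : ℝ)) * z ^ (∑ i, (y i : ℝ)) := by
      rw [← Nat.cast_sum, Real.rpow_natCast, ← Finset.prod_pow_eq_pow_sum, ← Finset.prod_mul_distrib]
      refine Finset.prod_congr rfl fun i _ => ?_
      rw [mul_pow]; ring
    simp only [gigKernel]
    rw [e1, add_sub_assoc, Real.rpow_add hz]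
    ring
  have hK := integral_gigKernel_pos hφ hφ α
  rw [hI, mpgigPMF, besselK_eq_integral_gigKernel α φ]
  calc _ = (∏ i, lam i ^ (y i) / (Nat.factorial (y i) : ℝ)) *
        (besselK ((∑ i, (y i : ℝ)) + α) (Real.sqrt (φ * (2 * (∑ i, lam i) + φ))) *
          (φ / (2 * (∑ i, lam i) + φ)) ^ (((∑ i, (y i : ℝ)) + α) / 2)) /
          (1 / 2 * ∫ z in Set.Ioi (0 : ℝ), gigKernel φ φ α z) := by ring
    _ = _ := by rw [hb]; field_simp

/-- the `MPGIG_p(λ,φ,α)` mass function is nonnegative and sums to one over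
`ℕ^p`, i.e. it defines a probability distribution on `ℕ^p`. -/
theorem mpgig_is_probability (p : ℕ) (hp : 1 ≤ p) (lam : Fin p → ℝ)
    (hlam : ∀ i, 0 < lam i) (φ α : ℝ) (hφ : 0 < φ) :
    (∀ y : Fin p → ℕ, 0 ≤ mpgigPMF p lam φ α y) ∧
    ∑' y : Fin p → ℕ, mpgigPMF p lam φ α y = 1 := by
  have hK := integral_gigKernel_pos hφ hφ α
  have hnn : ∀ (y : Fin p → ℕ) (z : ℝ), 0 < z → 0 ≤ gigKernel (2 * (∑ i, lam i) + φ) φ α z *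
      ∏ i, (lam i * z) ^ (y i) / ((y i).factorial : ℝ) := fun y z hz =>
    mul_nonneg (gigKernel_pos _ _ _ hz).le (Finset.prod_nonneg fun i _ =>
      div_nonneg (pow_nonneg (mul_pos (hlam i) hz).le _) (by positivity))
  have hsum : ∀ z : ℝ, 0 < z → HasSum (fun y : Fin p → ℕ =>
      gigKernel (2 * (∑ i, lam i) + φ) φ α z *
        ∏ i, (lam i * z) ^ (y i) / ((y i).factorial : ℝ)) (gigKernel φ φ α z) := by
    intro z hz
    convert! (hasSum_prod_pow_div_factorial p (fun i => lam i * z)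
      fun i => (mul_pos (hlam i) hz).le).mul_left (gigKernel (2 * (∑ i, lam i) + φ) φ α z) using 1
    rw [← Finset.sum_mul, gigKernel, gigKernel, mul_assoc, ← Real.exp_add]
    congr 2
    ring
  refine ⟨fun y => ?_, ?_⟩
  · rw [mpgigPMF_eq_integral hlam hφ]
    exact div_nonneg (setIntegral_nonneg measurableSet_Ioi fun z hz => hnn y z hz) hK.le
  · have hmem : ∀ᵐ z ∂(volume.restrict (Set.Ioi (0 : ℝ))), 0 < z :=
      ae_restrict_mem measurableSet_Ioi
    -- The terms are nonnegative with an integrable sum, so they serve as their own bounds.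
    have key := hasSum_integral_of_dominated_convergence
      (μ := volume.restrict (Set.Ioi (0 : ℝ)))
      (F := fun (y : Fin p → ℕ) z => gigKernel (2 * (∑ i, lam i) + φ) φ α z *
        ∏ i, (lam i * z) ^ (y i) / ((y i).factorial : ℝ))
      (f := gigKernel φ φ α)
      (fun (y : Fin p → ℕ) z => gigKernel (2 * (∑ i, lam i) + φ) φ α z *
        ∏ i, (lam i * z) ^ (y i) / ((y i).factorial : ℝ))
      (fun y => ((measurable_gigKernel _ _ _).mul (by fun_prop)).aestronglyMeasurable)
      (fun y => hmem.mono fun z hz => (Real.norm_of_nonneg (hnn y z hz)).le)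
      (hmem.mono fun z hz => (hsum z hz).summable)
      ((integrableOn_gigKernel hφ hφ α).congr (hmem.mono fun z hz => (hsum z hz).tsum_eq.symm))
      (hmem.mono fun z hz => hsum z hz)
    simp_rw [mpgigPMF_eq_integral hlam hφ]
    rw [(key.div_const _).tsum_eq, div_self hK.ne']
end

section
/- Let Y = (Y_1, …, Y_p) follow the MPGIG_p(λ, φ, α) distribution with λ_1, …, λ_p > 0, φ > 0, α ∈ ℝ. Then for each i, the mean of Y_i is finite and E(Y_i) = ∑_{y ∈ ℕ^p} y_i P(y) = λ_i · K_{α+1}(φ)/K_α(φ). -/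
/-!
The distribution is a Poisson mixture. With `c = 2Λ + φ`, the substitution `u = √(c/φ) z` in the
Bessel integral gives
`K_β(√(φc)) (φ/c)^(β/2) = (1/2) ∫_0^∞ z^(β-1) exp(-(c z + φ/z)/2) dz`,
so that, taking `β = s(y) + α`, `2 K_α(φ) · y_i P(y)` is the integral over `z > 0` of
`y_i ∏_j (λ_j z)^(y_j) / y_j!` against `z^(α-1) exp(-(c z + φ/z)/2)` (`besselK_sqrt_mul_rpow`).
For fixed `z` the sum over `y` factorises into one exponential series per coordinate and equals
`λ_i z exp(Λ z)` (`hasSum_coord_mul_prod`); the factor `exp(Λ z)` turns `c` into `φ`, and what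
remains is the integral defining `2 λ_i K_{α+1}(φ)`. All terms are nonnegative and the sum is
integrable (`integrableOn_bessel`), so sum and integral may be exchanged.
-/

open MeasureTheory Real Set Finset

/-- The product of `n` convergent series of nonnegative terms, summed over all multi-indices. -/
theorem hasSum_prod_fin_of_nonneg (n : ℕ) (f : Fin n → ℕ → ℝ) (a : Fin n → ℝ)
    (hf : ∀ j k, 0 ≤ f j k) (h : ∀ j, HasSum (f j) (a j)) :
    HasSum (fun y : Fin n → ℕ => ∏ j, f j (y j)) (∏ j, a j) := by
  induction n with
  | zero => simp
  | succ n ih =>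
    have ih' := ih (fun j => f j.succ) (fun j => a j.succ) (fun j => hf _) (fun j => h _)
    have hnn : (0 : (Fin n → ℕ) → ℝ) ≤ fun y => ∏ j, f (Fin.succ j) (y j) :=
      fun y => Finset.prod_nonneg fun j _ => hf _ _
    have hs : Summable fun x : ℕ × (Fin n → ℕ) => f 0 x.1 * ∏ j, f (Fin.succ j) (x.2 j) :=
      Summable.mul_of_nonneg (f := f 0) (g := fun y : Fin n → ℕ => ∏ j, f (Fin.succ j) (y j))
        (h 0).summable ih'.summable (fun k => hf 0 k) hnn
    have hmul := (h 0).mul ih' hs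
    rw [← (Fin.consEquiv (fun _ : Fin (n + 1) => ℕ)).hasSum_iff, Fin.prod_univ_succ]
    refine HasSum.congr_fun hmul fun x => ?_
    simp [Fin.consEquiv, Fin.prod_univ_succ]

theorem hasSum_exp_series (t : ℝ) :
    HasSum (fun k : ℕ => t ^ k / (Nat.factorial k : ℝ)) (Real.exp t) := by
  rw [Real.exp_eq_exp_ℝ]
  exact NormedSpace.expSeries_div_hasSum_exp t

theorem hasSum_nat_mul_exp_series (t : ℝ) :
    HasSum (fun k : ℕ => (k : ℝ) * (t ^ k / (Nat.factorial k : ℝ))) (t * Real.exp t) := by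
  rw [← hasSum_nat_add_iff' 1]
  simp only [Finset.range_one, Finset.sum_singleton, Nat.cast_zero, zero_mul, sub_zero]
  refine HasSum.congr_fun ((hasSum_exp_series t).mul_left t) fun k => ?_
  have : (Nat.factorial k : ℝ) ≠ 0 := by positivity
  rw [Nat.factorial_succ]
  push_cast
  field_simp
  ring

/-- The unnormalised first moment of a vector of independent Poisson variables. -/
theorem hasSum_coord_mul_prod (p : ℕ) (t : Fin p → ℝ) (ht : ∀ j, 0 ≤ t j) (i : Fin p) :
    HasSum (fun y : Fin p → ℕ => (y i : ℝ) * ∏ j, t j ^ y j / (Nat.factorial (y j) : ℝ))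
      (t i * Real.exp (∑ j, t j)) := by
  have h := hasSum_prod_fin_of_nonneg p
    (fun j k => (if j = i then (k : ℝ) else 1) * (t j ^ k / (Nat.factorial k : ℝ)))
    (fun j => (if j = i then t j else 1) * Real.exp (t j))
    (fun j k => by have := ht j; split_ifs <;> positivity)
    (fun j => by
      split_ifs
      · exact hasSum_nat_mul_exp_series _
      · simpa using hasSum_exp_series (t j))
  simp only [Finset.prod_mul_distrib, Finset.prod_ite_eq', Finset.mem_univ, if_true] at h
  rwa [Real.exp_sum]

theorem integrableOn_bessel (s φ : ℝ) (hφ : 0 < φ) :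
    IntegrableOn (fun z : ℝ => z ^ s * Real.exp (-(φ * (z + z⁻¹)) / 2)) (Set.Ioi 0) := by
  obtain ⟨n, hn⟩ := exists_nat_gt (-1 - s)
  have h0 := (integrableOn_rpow_mul_exp_neg_mul_rpow (p := 1) (s := s + n) (b := φ / 2)
    (by linarith) one_pos (by positivity)).const_mul ((Nat.factorial n : ℝ) * (2 / φ) ^ n)
  refine Integrable.mono' h0 (by fun_prop) ?_
  filter_upwards [ae_restrict_mem measurableSet_Ioi] with z hz
  have hz : 0 < z := hz
  rw [Real.norm_of_nonneg (by positivity), Real.rpow_one, Real.rpow_add hz, Real.rpow_natCast,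
    show -(φ * (z + z⁻¹)) / 2 = -(φ / 2) * z + -(φ / 2 * z⁻¹) by ring, Real.exp_add]
  -- The singularity at `0` is harmless: `exp(-w) ≤ n! / w^n` with `w = φ / (2z)`.
  have key : Real.exp (-(φ / 2 * z⁻¹)) ≤ (Nat.factorial n : ℝ) * (2 / φ) ^ n * z ^ n := by
    have hw : 0 < φ / 2 * z⁻¹ := by positivity
    have h1 := Real.pow_div_factorial_le_exp _ hw.le n
    have h2 : (0 : ℝ) < (φ / 2 * z⁻¹) ^ n / (Nat.factorial n : ℝ) := by positivity
    rw [Real.exp_neg]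
    refine (inv_anti₀ h2 h1).trans (le_of_eq ?_)
    rw [mul_assoc, ← mul_pow, inv_div, div_eq_mul_inv, ← inv_pow]
    congr 2
    field_simp
  calc z ^ s * (Real.exp (-(φ / 2) * z) * Real.exp (-(φ / 2 * z⁻¹)))
      ≤ z ^ s * (Real.exp (-(φ / 2) * z) * ((Nat.factorial n : ℝ) * (2 / φ) ^ n * z ^ n)) := by
        gcongr
    _ = _ := by ring

/-- The rescaling `u = √(c/φ) z` in the integral defining the Bessel function. -/
theorem besselK_sqrt_mul_rpow_s7 (β c φ : ℝ) (hc : 0 < c) (hφ : 0 < φ) :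
    besselK β (Real.sqrt (φ * c)) * (φ / c) ^ (β / 2)
      = (1 / 2) * ∫ z in Set.Ioi (0 : ℝ), z ^ (β - 1) * Real.exp (-(c * z + φ * z⁻¹) / 2) := by
  obtain ⟨a, ha, rfl⟩ : ∃ a : ℝ, 0 < a ∧ c = a ^ 2 :=
    ⟨√c, Real.sqrt_pos.2 hc, (Real.sq_sqrt hc.le).symm⟩
  obtain ⟨b, hb, rfl⟩ : ∃ b : ℝ, 0 < b ∧ φ = b ^ 2 :=
    ⟨√φ, Real.sqrt_pos.2 hφ, (Real.sq_sqrt hφ.le).symm⟩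
  have hr : 0 < a / b := by positivity
  have h := integral_comp_mul_left_Ioi'
    (fun u : ℝ => u ^ (β - 1) * Real.exp (-(b * a * (u + u⁻¹)) / 2)) 0 hr
  rw [mul_zero] at h
  have hpow : (b ^ 2 / a ^ 2) ^ (β / 2) = ((a / b) ^ β)⁻¹ := by
    rw [← div_pow, ← Real.rpow_natCast, ← Real.rpow_mul (by positivity),
      ← Real.inv_rpow hr.le, inv_div]
    congr 1
    push_cast
    ring
  have hint : ∫ z in Set.Ioi (0 : ℝ), (a / b * z) ^ (β - 1) *
        Real.exp (-(b * a * (a / b * z + (a / b * z)⁻¹)) / 2)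
      = (a / b) ^ (β - 1) *
        ∫ z in Set.Ioi (0 : ℝ), z ^ (β - 1) * Real.exp (-(a ^ 2 * z + b ^ 2 * z⁻¹) / 2) := by
    rw [← integral_const_mul]
    refine setIntegral_congr_fun measurableSet_Ioi fun z hz => ?_
    have hz : 0 < z := hz
    rw [Real.mul_rpow hr.le hz.le, mul_assoc]
    congr 4
    field_simp
  rw [besselK, ← mul_pow, Real.sqrt_sq (by positivity), ← h, hint, hpow, smul_eq_mul,
    Real.rpow_sub_one hr.ne']
  have : (a / b) ^ β ≠ 0 := (Real.rpow_pos_of_pos hr β).ne'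
  field_simp

/-- the marginal mean of an `MPGIG_p(λ,φ,α)` vector is finite and
`E(Y_i) = λ_i K_{α+1}(φ)/K_α(φ)`. -/
theorem mpgig_mean (p : ℕ) (hp : 1 ≤ p) (lam : Fin p → ℝ) (hlam : ∀ i, 0 < lam i)
    (φ α : ℝ) (hφ : 0 < φ) (i : Fin p) :
    Summable (fun y : Fin p → ℕ => (y i : ℝ) * mpgigPMF p lam φ α y) ∧
    ∑' y : Fin p → ℕ, (y i : ℝ) * mpgigPMF p lam φ α y
      = lam i * besselK (α + 1) φ / besselK α φ := by
  set L := ∑ j, lam j with hL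
  have hL0 : 0 ≤ L := Finset.sum_nonneg fun j _ => (hlam j).le
  have hc : 0 < 2 * L + φ := by positivity
  -- The `y`-th term of the sum, before integrating out the mixing variable `z`.
  let F : (Fin p → ℕ) → ℝ → ℝ := fun y z =>
    ((y i : ℝ) * ∏ j, (lam j * z) ^ y j / (Nat.factorial (y j) : ℝ)) *
      (z ^ (α - 1) * Real.exp (-((2 * L + φ) * z + φ * z⁻¹) / 2))
  let f : ℝ → ℝ := fun z => lam i * (z ^ (α + 1 - 1) * Real.exp (-(φ * (z + z⁻¹)) / 2))
  have hsum : ∀ z ∈ Set.Ioi (0 : ℝ), HasSum (fun y => F y z) (f z) := by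
    intro z hz
    have hz : 0 < z := hz
    have h := (hasSum_coord_mul_prod p (fun j => lam j * z)
      (fun j => mul_nonneg (hlam j).le hz.le) i).mul_right
      (z ^ (α - 1) * Real.exp (-((2 * L + φ) * z + φ * z⁻¹) / 2))
    refine (congrArg (HasSum (fun y => F y z)) ?_).mpr h
    simp only [f]
    rw [← Finset.sum_mul, ← hL, add_sub_right_comm, Real.rpow_add_one hz.ne',
      show -(φ * (z + z⁻¹)) / 2 = L * z + -((2 * L + φ) * z + φ * z⁻¹) / 2 by ring,
      Real.exp_add]
    ring
  have hF0 : ∀ y, ∀ z ∈ Set.Ioi (0 : ℝ), 0 ≤ F y z := by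
    intro y z hz
    have hz : 0 < z := hz
    have : 0 ≤ ∏ j, (lam j * z) ^ y j / (Nat.factorial (y j) : ℝ) :=
      Finset.prod_nonneg fun j _ => by have := hlam j; positivity
    positivity
  have hae := ae_restrict_mem (μ := (volume : Measure ℝ)) (measurableSet_Ioi (a := (0 : ℝ)))
  have hfint : IntegrableOn f (Set.Ioi 0) := (integrableOn_bessel (α + 1 - 1) φ hφ).const_mul _
  have hI : HasSum (fun y => ∫ z in Set.Ioi (0 : ℝ), F y z) (∫ z in Set.Ioi (0 : ℝ), f z) := by
    refine hasSum_integral_of_dominated_convergence F (fun y => by fun_prop) ?_ ?_ ?_ ?_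
    · intro y
      filter_upwards [hae] with z hz
      rw [Real.norm_of_nonneg (hF0 y z hz)]
    · filter_upwards [hae] with z hz using (hsum z hz).summable
    · refine hfint.congr ?_
      filter_upwards [hae] with z hz using (hsum z hz).tsum_eq.symm
    · filter_upwards [hae] with z hz using hsum z hz
  have hterm : ∀ y : Fin p → ℕ, (y i : ℝ) * mpgigPMF p lam φ α y
      = (1 / 2 / besselK α φ) * ∫ z in Set.Ioi (0 : ℝ), F y z := by
    intro y
    have hFy : ∫ z in Set.Ioi (0 : ℝ), F y z
        = ((y i : ℝ) * ∏ j, lam j ^ y j / (Nat.factorial (y j) : ℝ)) *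
          ∫ z in Set.Ioi (0 : ℝ), z ^ ((∑ j, (y j : ℝ)) + α - 1) *
            Real.exp (-((2 * L + φ) * z + φ * z⁻¹) / 2) := by
      rw [← integral_const_mul]
      refine setIntegral_congr_fun measurableSet_Ioi fun z hz => ?_
      have hz : 0 < z := hz
      simp only [F]
      rw [add_sub_assoc, Real.rpow_add hz, ← Nat.cast_sum, Real.rpow_natCast,
        ← Finset.prod_pow_eq_pow_sum]
      simp only [mul_pow, mul_div_right_comm, Finset.prod_mul_distrib]
      ring
    have hK := besselK_sqrt_mul_rpow_s7 ((∑ j, (y j : ℝ)) + α) (2 * L + φ) φ hc hφ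
    rw [hFy, mpgigPMF, ← hL]
    linear_combination ((y i : ℝ) * (∏ j, lam j ^ y j / (Nat.factorial (y j) : ℝ)) /
      besselK α φ) * hK
  have hfin : lam i * besselK (α + 1) φ / besselK α φ
      = (1 / 2 / besselK α φ) * ∫ z in Set.Ioi (0 : ℝ), f z := by
    simp only [f]
    rw [integral_const_mul, besselK]
    ring
  have hmain : HasSum (fun y : Fin p → ℕ => (y i : ℝ) * mpgigPMF p lam φ α y)
      (lam i * besselK (α + 1) φ / besselK α φ) := by
    rw [hfin, funext hterm]
    exact hI.mul_left _
  exact ⟨hmain.summable, hmain.tsum_eq⟩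
end

section
/- (Turán-type inequality for the modified Bessel function of the second kind.) For every real x > 0 and every α ∈ ℝ, K_{α+1}(x)² ≤ K_α(x) · K_{α+2}(x). Consequently, writing R_{α,k}(x) = K_{k+α}(x)/K_α(x) and R_α(x) = R_{α,1}(x), one has R_{α,2}(x) − R_α(x)² ≥ 0, so each marginal Y_i of an MPGIG_p(λ, φ, α) random vector is overdispersed: Var(Y_i) ≥ E(Y_i), and the contemporaneous covariances cov(Y_i, Y_j) = λ_i λ_j{R_{α,2}(φ) − R_α(φ)²} are nonnegative. -/
/-!
The numbers `2 K_{α+k}(x)` are the moments `∫ u ^ k dμ` of the finite positive measure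
`dμ = u ^ (α - 1) exp (-x (u + u⁻¹) / 2) du` on `(0, ∞)`, so `K_{α+1}² ≤ K_α K_{α+2}` is the
Cauchy–Schwarz inequality for the functions `1` and `u` in `L²(μ)`. Concretely, integrating
`(t - u) ^ 2 ≥ 0` shows that the quadratic `K_α t² - 2 K_{α+1} t + K_{α+2}` is nonnegative for
every real `t` (`besselK_quadratic_nonneg`), hence its discriminant is nonpositive.
Convergence of the integrals, which linearity of the integral requires, is
`integrableOn_besselK`. The remaining claims follow on dividing by `K_α(x)²`.
-/

open MeasureTheory Real Set Finset

/-- The integral defining `besselK α x` converges for every real `α`. The factor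
`exp (-(x / (2 * u)))` vanishes at `0` faster than any power of `u`, so the integrand is dominated
by a multiple of `u ^ (α - 1 + n) * exp (-(x / 2) * u)` with `n` large. -/
lemma integrableOn_besselK {x : ℝ} (hx : 0 < x) (α : ℝ) :
    IntegrableOn (fun u : ℝ => u ^ (α - 1) * Real.exp (-(x * (u + u⁻¹)) / 2)) (Set.Ioi 0) := by
  obtain ⟨n, hn⟩ := exists_nat_gt (-α)
  have hdom : IntegrableOn (fun u : ℝ => (n.factorial / (x / 2) ^ n) *
      (u ^ (α - 1 + n) * Real.exp (-(x / 2) * u ^ (1 : ℝ)))) (Set.Ioi 0) :=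
    (integrableOn_rpow_mul_exp_neg_mul_rpow (by linarith) one_pos (half_pos hx)).const_mul _
  refine Integrable.mono' hdom ?_ ?_
  · refine ContinuousOn.aestronglyMeasurable (fun u hu => ?_) measurableSet_Ioi
    have hu0 : u ≠ 0 := (Set.mem_Ioi.mp hu).ne'
    refine ContinuousAt.continuousWithinAt ?_
    exact (Real.continuousAt_rpow_const u _ (Or.inl hu0)).mul
      (((continuousAt_const.mul (continuousAt_id.add (continuousAt_inv₀ hu0))).neg.div_const
        2).rexp)
  · refine (ae_restrict_iff' measurableSet_Ioi).mpr (Filter.Eventually.of_forall fun u hu => ?_)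
    have hu : 0 < u := hu
    -- `y ^ n / n! ≤ exp y` at `y = x / (2 * u)` bounds the factor responsible for the decay at `0`.
    have hy : 0 < x / 2 * u⁻¹ := by positivity
    have hbound : Real.exp (-(x / 2 * u⁻¹)) ≤ n.factorial / (x / 2) ^ n * u ^ n := by
      have h := Real.pow_div_factorial_le_exp _ hy.le n
      rw [Real.exp_neg]
      refine (inv_anti₀ (by positivity) h).trans_eq ?_
      rw [mul_pow, inv_pow]
      field_simp
    rw [Real.norm_of_nonneg (by positivity), Real.rpow_one, Real.rpow_add hu, Real.rpow_natCast,
      show -(x * (u + u⁻¹)) / 2 = -(x / 2) * u + -(x / 2 * u⁻¹) by ring, Real.exp_add]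
    calc u ^ (α - 1) * (Real.exp (-(x / 2) * u) * Real.exp (-(x / 2 * u⁻¹)))
        ≤ u ^ (α - 1) * (Real.exp (-(x / 2) * u) * (n.factorial / (x / 2) ^ n * u ^ n)) := by
          gcongr
      _ = _ := by ring

lemma besselK_quadratic_nonneg {x : ℝ} (hx : 0 < x) (α t : ℝ) :
    0 ≤ besselK α x * (t * t) + (-2 * besselK (α + 1) x) * t + besselK (α + 2) x := by
  have h0 := (integrableOn_besselK hx α).mul_const (t * t)
  have h1 := (integrableOn_besselK hx (α + 1)).mul_const (-2 * t)
  have h2 := integrableOn_besselK hx (α + 2)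
  have hint : 0 ≤ ∫ u in Set.Ioi (0 : ℝ),
      (u ^ (α - 1) * Real.exp (-(x * (u + u⁻¹)) / 2) * (t * t)
        + u ^ (α + 1 - 1) * Real.exp (-(x * (u + u⁻¹)) / 2) * (-2 * t)
        + u ^ (α + 2 - 1) * Real.exp (-(x * (u + u⁻¹)) / 2)) := by
    refine setIntegral_nonneg measurableSet_Ioi fun u hu => ?_
    have hu : 0 < u := hu
    have e1 : u ^ (α + 1 - 1) = u ^ (α - 1) * u := by
      rw [show α + 1 - 1 = α - 1 + 1 by ring, Real.rpow_add hu, Real.rpow_one]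
    have e2 : u ^ (α + 2 - 1) = u ^ (α - 1) * u ^ 2 := by
      rw [show α + 2 - 1 = α - 1 + 2 by ring, Real.rpow_add hu, Real.rpow_two]
    have hsq : 0 ≤ u ^ (α - 1) * Real.exp (-(x * (u + u⁻¹)) / 2) * (t - u) ^ 2 := by positivity
    rw [e1, e2]
    linear_combination hsq
  rw [integral_add (h0.fun_add h1) h2, integral_add h0 h1, integral_mul_const,
    integral_mul_const] at hint
  unfold besselK
  linear_combination hint / 2

lemma besselK_sq_le {x : ℝ} (hx : 0 < x) (α : ℝ) :
    besselK (α + 1) x ^ 2 ≤ besselK α x * besselK (α + 2) x := by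
  have h := discrim_le_zero (besselK_quadratic_nonneg hx α)
  unfold discrim at h
  linarith

lemma besselK_ratio_nonneg {x : ℝ} (hx : 0 < x) (α : ℝ) :
    0 ≤ besselK (2 + α) x / besselK α x - (besselK (1 + α) x / besselK α x) ^ 2 := by
  have h := besselK_sq_le hx α
  rw [add_comm 2 α, add_comm 1 α]
  -- If `besselK α x` were `0`, both quotients would be `0` by convention, so its positivity
  -- is not needed.
  rcases eq_or_ne (besselK α x) 0 with h0 | h0
  · simp [h0]
  · have e : besselK (α + 2) x / besselK α x - (besselK (α + 1) x / besselK α x) ^ 2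
        = (besselK α x * besselK (α + 2) x - besselK (α + 1) x ^ 2) / besselK α x ^ 2 := by
      field_simp
    rw [e]
    exact div_nonneg (sub_nonneg.mpr h) (sq_nonneg _)

/-- Turán-type inequality `K_{α+1}(x)² ≤ K_α(x) K_{α+2}(x)` for `x > 0`;
consequently `R_{α,2}(x) − R_α(x)² ≥ 0`, each `MPGIG_p` marginal is overdispersed
(`Var(Y_i) ≥ E(Y_i)`, with `E(Y_i) = λ_i R_α(φ)` and
`Var(Y_i) = λ_i R_α(φ) + λ_i²{R_{α,2}(φ) − R_α(φ)²}`), and the contemporaneous covariances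
`λ_i λ_j {R_{α,2}(φ) − R_α(φ)²}` are nonnegative. -/
theorem besselK_turan :
    (∀ x : ℝ, 0 < x → ∀ α : ℝ,
      besselK (α + 1) x ^ 2 ≤ besselK α x * besselK (α + 2) x) ∧
    (∀ x : ℝ, 0 < x → ∀ α : ℝ,
      0 ≤ besselK (2 + α) x / besselK α x - (besselK (1 + α) x / besselK α x) ^ 2) ∧
    (∀ φ : ℝ, 0 < φ → ∀ α : ℝ, ∀ l : ℝ, 0 < l →
      l * (besselK (1 + α) φ / besselK α φ) ≤
        l * (besselK (1 + α) φ / besselK α φ)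
          + l ^ 2 * (besselK (2 + α) φ / besselK α φ
              - (besselK (1 + α) φ / besselK α φ) ^ 2)) ∧
    (∀ φ : ℝ, 0 < φ → ∀ α : ℝ, ∀ li lj : ℝ, 0 < li → 0 < lj →
      0 ≤ li * lj * (besselK (2 + α) φ / besselK α φ
            - (besselK (1 + α) φ / besselK α φ) ^ 2)) := by
  exact ⟨fun x hx α => besselK_sq_le hx α, fun x hx α => besselK_ratio_nonneg hx α,
    fun φ hφ α l _ =>
      le_add_of_nonneg_right (mul_nonneg (sq_nonneg l) (besselK_ratio_nonneg hφ α)),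
    fun φ hφ α li lj hi hj => mul_nonneg (mul_pos hi hj).le (besselK_ratio_nonneg hφ α)⟩
end

section
/- (Proposition 1, conditional expectation ξ.) Let λ_1, …, λ_p > 0, φ > 0, α ∈ ℝ, y ∈ ℕ^p with s = ∑_i y_i and Λ = ∑_i λ_i, and set x = √(φ(2Λ+φ)). Then z ↦ (log z) g(z; 2Λ+φ, φ, s+α) is integrable on (0, ∞) and ξ = ∫_0^∞ (log z) g(z; 2Λ+φ, φ, s+α) dz = [(d/dν) log K_ν(x)]|_{ν = s+α} + (1/2) log(φ/(2Λ+φ)), where (d/dν) K_ν(x) = (1/2)∫_0^∞ u^(ν−1) (log u) exp(−x(u + u⁻¹)/2) du. -/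
/-!
The integrand `u ^ s * exp (-x (u + u⁻¹) / 2)` with `x > 0` is integrable on `(0, ∞)` for every real
exponent `s`: near `0` the factor `exp (-x / (2u))` beats every power of `u`, so an integer power
`u ^ n` can be gained and the function is dominated by a Gamma integrand (`integrableOn_kernel`).
Since `|log u| ≤ u + u⁻¹`, a logarithmic factor only shifts the exponent by one, which gives both
integrability of the log-weighted kernel and, by dominated differentiation on the unit ball around
`ν`, the derivative of `K_ν(x)` in the order (`hasDerivAt_besselK_order`).

For the expectation, substitute `z = c u` with `c = √(b / a)`. Then `a z + b / z = √(a b) (u + u⁻¹)`,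
and the GIG density becomes `c⁻¹ u ^ (ν - 1) exp (-x (u + u⁻¹) / 2) / (2 K_ν(x))`. Splitting
`log (c u) = log c + log u` yields `log c + K_ν' / K_ν`.
-/

open MeasureTheory Real Set Finset

/-- The kernel is integrable for every exponent, negative ones included: the bound
`t ^ n / n! ≤ exp t` at `t = x / (2u)` trades `exp (-x / (2u))` for a multiple of `u ^ n`. -/
lemma integrableOn_kernel (x : ℝ) (hx : 0 < x) (s : ℝ) :
    IntegrableOn (fun u : ℝ => u ^ s * Real.exp (-(x * (u + u⁻¹)) / 2)) (Set.Ioi 0) := by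
  obtain ⟨n, hn⟩ := exists_nat_gt (-1 - s)
  have hG : IntegrableOn (fun u : ℝ => ((n.factorial : ℝ) * (2 / x) ^ n) *
      (u ^ (s + n) * Real.exp (-(x / 2) * u ^ (1 : ℝ)))) (Set.Ioi 0) :=
    (integrableOn_rpow_mul_exp_neg_mul_rpow (by linarith) one_pos (half_pos hx)).const_mul _
  refine Integrable.mono' hG (by fun_prop) ?_
  filter_upwards [ae_restrict_mem measurableSet_Ioi] with u hu
  have hu : 0 < u := hu
  have hus : 0 < u ^ s := Real.rpow_pos_of_pos hu s
  rw [Real.norm_of_nonneg (by positivity), Real.rpow_add hu, Real.rpow_natCast, Real.rpow_one]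
  have hsplit : Real.exp (-(x * (u + u⁻¹)) / 2)
      = Real.exp (-(x / 2) * u) * Real.exp (-(x / (2 * u))) := by
    rw [← Real.exp_add]
    congr 1
    field_simp
    ring
  have ht : 0 < x / (2 * u) := by positivity
  have hpow : Real.exp (-(x / (2 * u))) ≤ (n.factorial : ℝ) * (2 / x) ^ n * u ^ n := by
    have h := Real.pow_div_factorial_le_exp (x / (2 * u)) ht.le n
    have hinv : (n.factorial : ℝ) * (2 / x) ^ n * u ^ n
        = ((x / (2 * u)) ^ n / (n.factorial : ℝ))⁻¹ := by
      rw [inv_div, mul_assoc, ← mul_pow, div_eq_mul_inv (n.factorial : ℝ), ← inv_pow, inv_div]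
      congr 2
      ring
    rw [Real.exp_neg, hinv]
    exact inv_anti₀ (by positivity) h
  rw [hsplit]
  calc u ^ s * (Real.exp (-(x / 2) * u) * Real.exp (-(x / (2 * u))))
      ≤ u ^ s * (Real.exp (-(x / 2) * u) * ((n.factorial : ℝ) * (2 / x) ^ n * u ^ n)) := by gcongr
    _ = _ := by ring

lemma integrableOn_kernel_log (x : ℝ) (hx : 0 < x) (s : ℝ) :
    IntegrableOn (fun u : ℝ => u ^ s * Real.log u * Real.exp (-(x * (u + u⁻¹)) / 2))
      (Set.Ioi 0) := by
  refine Integrable.mono'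
    ((integrableOn_kernel x hx (s + 1)).add (integrableOn_kernel x hx (s - 1)))
    (by fun_prop) ?_
  filter_upwards [ae_restrict_mem measurableSet_Ioi] with u hu
  have hu : 0 < u := hu
  have hus : 0 < u ^ s := Real.rpow_pos_of_pos hu s
  have hl := abs_log_le_add_inv hu
  simp only [Pi.add_apply, norm_mul, Real.norm_eq_abs, abs_of_pos hus, Real.abs_exp]
  rw [Real.rpow_add hu, Real.rpow_sub hu, Real.rpow_one]
  calc _ ≤ u ^ s * (u + u⁻¹) * Real.exp (-(x * (u + u⁻¹)) / 2) := by gcongr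
    _ = _ := by ring

lemma rpow_le_rpow_add_rpow_s14 {u a b c : ℝ} (hu : 0 < u) (hac : a ≤ c) (hcb : c ≤ b) :
    u ^ c ≤ u ^ a + u ^ b := by
  rcases le_total u 1 with h | h
  · have := Real.rpow_le_rpow_of_exponent_ge hu h hac
    linarith [Real.rpow_pos_of_pos hu b]
  · have := Real.rpow_le_rpow_of_exponent_le h hcb
    linarith [Real.rpow_pos_of_pos hu a]

/-- Differentiation under the integral sign in the order of the Bessel function. -/
lemma hasDerivAt_besselK_order (x : ℝ) (hx : 0 < x) (ν : ℝ) :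
    HasDerivAt (fun ν' : ℝ => besselK ν' x)
      ((1/2) * ∫ u in Set.Ioi (0:ℝ),
        u ^ (ν - 1) * Real.log u * Real.exp (-(x * (u + u⁻¹)) / 2)) ν := by
  unfold besselK
  refine HasDerivAt.const_mul (1/2 : ℝ) ?_
  -- For `|ν' - ν| < 1` the power `u ^ (ν' - 1)` lies below `u ^ (ν - 2) + u ^ ν`.
  have hbound : IntegrableOn (fun u : ℝ =>
      ‖u ^ (ν - 2) * Real.log u * Real.exp (-(x * (u + u⁻¹)) / 2)‖ +
      ‖u ^ ν * Real.log u * Real.exp (-(x * (u + u⁻¹)) / 2)‖) (Set.Ioi 0) :=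
    (integrableOn_kernel_log x hx (ν - 2)).norm.add (integrableOn_kernel_log x hx ν).norm
  refine (hasDerivAt_integral_of_dominated_loc_of_deriv_le
    (F := fun ν' u => u ^ (ν' - 1) * Real.exp (-(x * (u + u⁻¹)) / 2))
    (F' := fun ν' u => u ^ (ν' - 1) * Real.log u * Real.exp (-(x * (u + u⁻¹)) / 2))
    (Metric.ball_mem_nhds ν one_pos) (Filter.Eventually.of_forall fun ν' => by fun_prop)
    (integrableOn_kernel x hx (ν - 1)) (by fun_prop) ?_ hbound ?_).2
  · filter_upwards [ae_restrict_mem measurableSet_Ioi] with u hu ν' hν'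
    have hu : 0 < u := hu
    rw [Metric.mem_ball, Real.dist_eq, abs_lt] at hν'
    have h := rpow_le_rpow_add_rpow_s14 (a := ν - 2) (b := ν) (c := ν' - 1) hu
      (by linarith [hν'.1]) (by linarith [hν'.2])
    simp only [norm_mul, Real.norm_eq_abs, Real.abs_exp, abs_of_pos (Real.rpow_pos_of_pos hu _)]
    rw [← add_mul, ← add_mul]
    gcongr
  · filter_upwards [ae_restrict_mem measurableSet_Ioi] with u hu ν' _
    have hu : 0 < u := hu
    have h := ((hasDerivAt_id ν').sub_const 1).const_rpow hu
    simpa [mul_comm] using h.mul_const (Real.exp (-(x * (u + u⁻¹)) / 2))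

lemma besselK_pos (x : ℝ) (hx : 0 < x) (ν : ℝ) : 0 < besselK ν x := by
  unfold besselK
  refine mul_pos (by norm_num) ?_
  have hpos : ∀ u ∈ Set.Ioi (0:ℝ), 0 < u ^ (ν - 1) * Real.exp (-(x * (u + u⁻¹)) / 2) :=
    fun u hu => mul_pos (Real.rpow_pos_of_pos hu _) (Real.exp_pos _)
  rw [setIntegral_pos_iff_support_of_nonneg_ae
    ((ae_restrict_mem measurableSet_Ioi).mono fun u hu => (hpos u hu).le)
    (integrableOn_kernel x hx (ν - 1))]
  have hsub : Set.Ioi (0:ℝ) ⊆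
      Function.support fun u : ℝ => u ^ (ν - 1) * Real.exp (-(x * (u + u⁻¹)) / 2) :=
    fun u hu => (hpos u hu).ne'
  rw [Set.inter_eq_right.2 hsub]
  simp

/-- The GIG density in the scaled variable `z = √(b / a) u`. -/
lemma gigPDF_scale {a b : ℝ} (ha : 0 < a) (hb : 0 < b) (ν : ℝ) {u : ℝ} (hu : 0 < u) :
    gigPDF a b ν (Real.sqrt (b / a) * u) = (Real.sqrt (b / a))⁻¹ *
      (2 * besselK ν (Real.sqrt (a * b)))⁻¹ *
      (u ^ (ν - 1) * Real.exp (-(Real.sqrt (a * b) * (u + u⁻¹)) / 2)) := by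
  have hc : 0 < Real.sqrt (b / a) := Real.sqrt_pos.2 (by positivity)
  have hac : a * Real.sqrt (b / a) = Real.sqrt (a * b) := by
    rw [← Real.sqrt_sq ha.le, ← Real.sqrt_mul (by positivity), Real.sqrt_sq ha.le]
    congr 1
    field_simp
  have hbc : b * (Real.sqrt (b / a))⁻¹ = Real.sqrt (a * b) := by
    rw [← hac, ← div_eq_mul_inv, div_eq_iff hc.ne', mul_assoc,
      Real.mul_self_sqrt (by positivity)]
    field_simp
  have hpow : (a / b) ^ (ν / 2) * Real.sqrt (b / a) ^ (ν - 1) = (Real.sqrt (b / a))⁻¹ := by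
    have h1 : (a / b) ^ (ν / 2) = (Real.sqrt (b / a) ^ ν)⁻¹ := by
      rw [Real.sqrt_eq_rpow, ← Real.rpow_mul (by positivity), ← Real.inv_rpow (by positivity),
        inv_div]
      congr 1
      ring
    have h2 : 0 < Real.sqrt (b / a) ^ ν := Real.rpow_pos_of_pos hc ν
    rw [h1, Real.rpow_sub_one hc.ne']
    field_simp
  have hexp : a * (Real.sqrt (b / a) * u) + b * (Real.sqrt (b / a) * u)⁻¹
      = Real.sqrt (a * b) * (u + u⁻¹) := by
    rw [mul_inv, ← mul_assoc, ← mul_assoc, hac, hbc]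
    ring
  unfold gigPDF
  rw [hexp, Real.mul_rpow hc.le hu.le, ← hpow]
  ring

/-- After the substitution, `log z` splits as `log c + log u`. -/
lemma log_mul_gigPDF_scale {a b : ℝ} (ha : 0 < a) (hb : 0 < b) (ν : ℝ) {u : ℝ} (hu : 0 < u) :
    Real.log (Real.sqrt (b / a) * u) * gigPDF a b ν (Real.sqrt (b / a) * u) =
      (Real.sqrt (b / a))⁻¹ * (2 * besselK ν (Real.sqrt (a * b)))⁻¹ *
      (Real.log (Real.sqrt (b / a)) *
          (u ^ (ν - 1) * Real.exp (-(Real.sqrt (a * b) * (u + u⁻¹)) / 2)) +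
        u ^ (ν - 1) * Real.log u * Real.exp (-(Real.sqrt (a * b) * (u + u⁻¹)) / 2)) := by
  have hc : 0 < Real.sqrt (b / a) := Real.sqrt_pos.2 (by positivity)
  rw [gigPDF_scale ha hb ν hu, Real.log_mul hc.ne' hu.ne']
  ring

lemma gig_integrableOn_log {a b : ℝ} (ha : 0 < a) (hb : 0 < b) (ν : ℝ) :
    IntegrableOn (fun z : ℝ => Real.log z * gigPDF a b ν z) (Set.Ioi 0) := by
  have hc : 0 < Real.sqrt (b / a) := Real.sqrt_pos.2 (by positivity)
  have hx : 0 < Real.sqrt (a * b) := Real.sqrt_pos.2 (by positivity)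
  have h := integrableOn_Ioi_comp_mul_left_iff
    (fun z : ℝ => Real.log z * gigPDF a b ν z) 0 hc
  rw [mul_zero] at h
  rw [← h, integrableOn_congr_fun (fun u (hu : u ∈ Set.Ioi (0:ℝ)) =>
    log_mul_gigPDF_scale ha hb ν hu) measurableSet_Ioi]
  exact (((integrableOn_kernel _ hx (ν - 1)).const_mul _).add
    (integrableOn_kernel_log _ hx (ν - 1))).const_mul _

lemma gig_integral_log {a b : ℝ} (ha : 0 < a) (hb : 0 < b) (ν : ℝ) :
    ∫ z in Set.Ioi (0:ℝ), Real.log z * gigPDF a b ν z =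
      deriv (fun ν' : ℝ => Real.log (besselK ν' (Real.sqrt (a * b)))) ν
        + (1/2) * Real.log (b / a) := by
  have hc : 0 < Real.sqrt (b / a) := Real.sqrt_pos.2 (by positivity)
  have hx : 0 < Real.sqrt (a * b) := Real.sqrt_pos.2 (by positivity)
  have hK := besselK_pos _ hx ν
  rw [((hasDerivAt_besselK_order _ hx ν).log hK.ne').deriv]
  have h := integral_comp_mul_left_Ioi (fun z : ℝ => Real.log z * gigPDF a b ν z) 0 hc
  rw [mul_zero, smul_eq_mul, eq_comm, inv_mul_eq_iff_eq_mul₀ hc.ne'] at h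
  rw [h, setIntegral_congr_fun measurableSet_Ioi
      (fun u hu => log_mul_gigPDF_scale ha hb ν hu), integral_const_mul,
    integral_add ((integrableOn_kernel _ hx (ν - 1)).const_mul _)
      (integrableOn_kernel_log _ hx (ν - 1)), integral_const_mul]
  have hI : ∫ u in Set.Ioi (0:ℝ), u ^ (ν - 1) *
      Real.exp (-(Real.sqrt (a * b) * (u + u⁻¹)) / 2) = 2 * besselK ν (Real.sqrt (a * b)) := by
    unfold besselK
    ring
  rw [hI, Real.log_sqrt (by positivity)]
  generalize besselK ν (Real.sqrt (a * b)) = K at hK ⊢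
  generalize ∫ u in Set.Ioi (0:ℝ), u ^ (ν - 1) * Real.log u *
    Real.exp (-(Real.sqrt (a * b) * (u + u⁻¹)) / 2) = J
  generalize Real.log (b / a) = L
  field_simp
  ring

/-- Proposition 1, conditional expectation ξ: with `x = √(φ(2Λ+φ))`,
`z ↦ (log z) g(z; 2Λ+φ, φ, s+α)` is integrable on `(0,∞)` and
`ξ = [(d/dν) log K_ν(x)]|_{ν=s+α} + (1/2) log(φ/(2Λ+φ))`, where
`(d/dν) K_ν(x) = (1/2)∫_0^∞ u^(ν−1)(log u) exp(−x(u+u⁻¹)/2) du`. -/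
theorem mpgig_posterior_log_mean (p : ℕ) (hp : 1 ≤ p) (lam : Fin p → ℝ)
    (hlam : ∀ i, 0 < lam i) (φ α : ℝ) (hφ : 0 < φ) (y : Fin p → ℕ) :
    MeasureTheory.IntegrableOn
      (fun z : ℝ => Real.log z * gigPDF (2 * (∑ i, lam i) + φ) φ ((∑ i, (y i : ℝ)) + α) z)
      (Set.Ioi 0) ∧
    (∀ ν : ℝ, HasDerivAt
      (fun ν' : ℝ => besselK ν' (Real.sqrt (φ * (2 * (∑ i, lam i) + φ))))
      ((1/2) * ∫ u in Set.Ioi (0:ℝ),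
        u ^ (ν - 1) * Real.log u *
          Real.exp (-(Real.sqrt (φ * (2 * (∑ i, lam i) + φ)) * (u + u⁻¹)) / 2)) ν) ∧
    (∫ z in Set.Ioi (0:ℝ),
        Real.log z * gigPDF (2 * (∑ i, lam i) + φ) φ ((∑ i, (y i : ℝ)) + α) z)
      = deriv (fun ν : ℝ =>
            Real.log (besselK ν (Real.sqrt (φ * (2 * (∑ i, lam i) + φ)))))
          ((∑ i, (y i : ℝ)) + α)
        + (1/2) * Real.log (φ / (2 * (∑ i, lam i) + φ)) := by
  have hL : 0 ≤ ∑ i, lam i := Finset.sum_nonneg fun i _ => (hlam i).le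
  have ha : 0 < 2 * (∑ i, lam i) + φ := by linarith
  refine ⟨gig_integrableOn_log ha hφ _, fun ν => ?_, ?_⟩
  · exact hasDerivAt_besselK_order _ (Real.sqrt_pos.2 (mul_pos hφ ha)) ν
  · rw [mul_comm φ]
    exact gig_integral_log ha hφ _
end
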